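/- Define f : ℝ⁶ → ℝ⁶ by f₁(x) = −0.05·x₃x₅ + 0.05·x₂x₆; f₂(x) = −0.05·x₆ + 0.05·x₃x₄ − 0.05·x₁x₆; f₃(x) = 0.05·x₅ − 0.05·x₂x₄ + 0.05·x₁x₅; f₄(x) = −0.016·x₄; f₅(x) = −0.00226·x₃ − 0.016·x₅ + 0.0133·x₄x₆ − 0.00807·x₂²x₃ − 0.00799·x₃³ + 0.00389·x₂⁴x₃ + 0.00389·x₃⁵; f₆(x) = 0.00226·x₂ − 0.016·x₆ − 0.0133·x₄x₅ + 0.00799·x₂³ + 0.00807·x₂x₃² − 0.00389·x₂⁵ − 0.00389·x₂x₃⁴, let h(x) = 2x₁ + x₁² + x₂² + x₃², and let x₂* = (−2,0,0,0,0,0). Then there exist v ∈ ℝ⁶ with v ≠ 0 and ⟨∇h(x₂*), v⟩ = 0, and λ > 0, such that Df(x₂*) v = λ v; that is, the Jacobian of f at the antipodal equilibrium has a positive real eigenvalue with eigenvector tangent to the constraint manifold H = {x : h(x) = 0}. -/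

import Mathlib

open scoped RealInnerProductSpace

/-- The transformed closed-loop aerostability dynamics of Example 1, as a vector
field on Euclidean 6-space. -/
noncomputable def aeroF (x : EuclideanSpace ℝ (Fin 6)) : EuclideanSpace ℝ (Fin 6) :=
  (EuclideanSpace.equiv (Fin 6) ℝ).symm
  ![-0.05 * (x 2 * x 4) + 0.05 * (x 1 * x 5),
    -0.05 * x 5 + 0.05 * (x 2 * x 3) - 0.05 * (x 0 * x 5),
    0.05 * x 4 - 0.05 * (x 1 * x 3) + 0.05 * (x 0 * x 4),
    -0.016 * x 3,
    -0.00226 * x 2 - 0.016 * x 4 + 0.0133 * (x 3 * x 5) - 0.00807 * (x 1 ^ 2 * x 2)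
      - 0.00799 * x 2 ^ 3 + 0.00389 * (x 1 ^ 4 * x 2) + 0.00389 * x 2 ^ 5,
    0.00226 * x 1 - 0.016 * x 5 - 0.0133 * (x 3 * x 4) + 0.00799 * x 1 ^ 3
      + 0.00807 * (x 1 * x 2 ^ 2) - 0.00389 * x 1 ^ 5 - 0.00389 * (x 1 * x 2 ^ 4)]

/-- The unit-norm constraint in shifted coordinates. -/
def aeroH (x : EuclideanSpace ℝ (Fin 6)) : ℝ := 2 * x 0 + x 0 ^ 2 + x 1 ^ 2 + x 2 ^ 2

/-- The antipodal equilibrium `x₂* = (−2,0,0,0,0,0)`. -/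
noncomputable def xstar2 : EuclideanSpace ℝ (Fin 6) :=
  (EuclideanSpace.equiv (Fin 6) ℝ).symm ![-2, 0, 0, 0, 0, 0]

/-- The Jacobian of `aeroF` at the antipodal equilibrium, applied to a vector. -/
theorem fderiv_aeroF_xstar2_apply (v : EuclideanSpace ℝ (Fin 6)) :
    fderiv ℝ aeroF xstar2 v = (EuclideanSpace.equiv (Fin 6) ℝ).symm
      ![0, 0.05 * v 5, -0.05 * v 4, -0.016 * v 3, -0.00226 * v 2 - 0.016 * v 4,
        0.00226 * v 1 - 0.016 * v 5] := by
  have hd : Differentiable ℝ aeroF := by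
    rw [differentiable_euclidean]
    intro i
    fin_cases i <;> simp [aeroF] <;> fun_prop
  have hline : HasDerivAt (fun t : ℝ => aeroF (xstar2 + t • v))
      (fderiv ℝ aeroF xstar2 v) 0 :=
    (hd xstar2).hasFDerivAt.hasLineDerivAt v
  ext i
  have hi : HasDerivAt (fun t : ℝ => aeroF (xstar2 + t • v) i) (fderiv ℝ aeroF xstar2 v i) 0 :=
    (EuclideanSpace.proj (𝕜 := ℝ) i).hasFDerivAt.comp_hasDerivAt (0 : ℝ) hline
  rw [← hi.deriv]
  fin_cases i <;> simp (disch := fun_prop) [aeroF, xstar2,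
    deriv_fun_add, deriv_fun_sub, deriv_fun_mul, deriv_fun_pow]
  all_goals ring

/-- The differential of the constraint at the antipodal equilibrium. -/
theorem inner_gradient_aeroH_xstar2 (v : EuclideanSpace ℝ (Fin 6)) :
    ⟪gradient aeroH xstar2, v⟫ = -2 * v 0 := by
  have hd : Differentiable ℝ aeroH := by
    unfold aeroH
    fun_prop
  have hline : HasDerivAt (fun t : ℝ => aeroH (xstar2 + t • v))
      (fderiv ℝ aeroH xstar2 v) 0 :=
    (hd xstar2).hasFDerivAt.hasLineDerivAt v
  rw [gradient, InnerProductSpace.toDual_symm_apply, ← hline.deriv]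
  simp (disch := fun_prop) [aeroH, xstar2, deriv_fun_add, deriv_fun_mul, deriv_fun_pow]
  ring

/-- The Jacobian of the closed-loop aerostability dynamics at the antipodal
equilibrium has a positive real eigenvalue with eigenvector tangent to the
constraint manifold `H = {x | aeroH x = 0}`. -/
theorem stmt_15 :
    ∃ v : EuclideanSpace ℝ (Fin 6), v ≠ 0 ∧ ⟪gradient aeroH xstar2, v⟫ = 0 ∧
      ∃ lam : ℝ, 0 < lam ∧ fderiv ℝ aeroF xstar2 v = lam • v := by
  obtain ⟨lam, hpos, hroot⟩ : ∃ lam : ℝ, 0 < lam ∧ lam ^ 2 + 0.016 * lam = 0.000113 := by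
    refine ⟨√0.000177 - 0.008, sub_pos.2 (Real.lt_sqrt_of_sq_lt (by norm_num)), ?_⟩
    linear_combination Real.sq_sqrt (show (0 : ℝ) ≤ 0.000177 by norm_num)
  refine ⟨(EuclideanSpace.equiv (Fin 6) ℝ).symm ![0, 0.05, 0, 0, 0, lam], ?_, ?_, lam, hpos, ?_⟩
  · intro h
    have h1 := congrArg (fun w : EuclideanSpace ℝ (Fin 6) => w 1) h
    norm_num at h1
  · rw [inner_gradient_aeroH_xstar2]
    simp
  · rw [fderiv_aeroF_xstar2_apply]
    ext i
    fin_cases i <;> simp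
    · ring
    · linear_combination -hroot
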